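/- Let d > 2s and let ρ be an admissible weight with exponents (γ₀,γ). Let u be a weak solution of the Cauchy problem ρ u_t + (-Δ)^s(u^m) = 0 with initial datum the positive finite Radon measure μ. Then mass is conserved: ∫_{ℝ^d} u(x,t) ρ(x) dx = μ(ℝ^d) for a.e. t > 0. -/

import Mathlib

open MeasureTheory Filter Topology Set
open scoped ENNReal NNReal

noncomputable section

/-- `d`-dimensional Euclidean space. -/
abbrev Ed (d : ℕ) : Type := EuclideanSpace ℝ (Fin d)

/-- An admissible weight with exponents `(γ₀, γ)` and constants `0 < c < C`:
a measurable, everywhere positive function comparable to `|x|^{-γ₀}` near the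
origin and to `|x|^{-γ}` at infinity. -/
def AdmissibleWeight (d : ℕ) (ρ : Ed d → ℝ) (γ₀ γ c C : ℝ) : Prop :=
  0 < c ∧ c < C ∧ Measurable ρ ∧ (∀ x, 0 < ρ x) ∧
    (∀ᵐ x ∂(volume : Measure (Ed d)), ‖x‖ ≤ 1 →
      c * ‖x‖ ^ (-γ₀) ≤ ρ x ∧ ρ x ≤ C * ‖x‖ ^ (-γ₀)) ∧
    (∀ᵐ x ∂(volume : Measure (Ed d)), 1 < ‖x‖ →
      c * ‖x‖ ^ (-γ) ≤ ρ x ∧ ρ x ≤ C * ‖x‖ ^ (-γ))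

/-- The Gagliardo bilinear form `E(v,w)` of order `s` with normalizing constant `κ`. -/
def gagliardoE (d : ℕ) (s κ : ℝ) (v w : Ed d → ℝ) : ℝ :=
  (κ / 2) * ∫ p : Ed d × Ed d,
    (v p.1 - v p.2) * (w p.1 - w p.2) / ‖p.1 - p.2‖ ^ ((d : ℝ) + 2 * s)

/-- The squared homogeneous fractional Sobolev seminorm `‖v‖_{Ḣ^s}² = E(v,v)`,
with values in `[0,∞]`. -/
def gagliardoSq (d : ℕ) (s κ : ℝ) (v : Ed d → ℝ) : ℝ≥0∞ :=
  ENNReal.ofReal (κ / 2) * ∫⁻ p : Ed d × Ed d,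
    ENNReal.ofReal ((v p.1 - v p.2) ^ 2 / ‖p.1 - p.2‖ ^ ((d : ℝ) + 2 * s))

/-- The weighted `L^p` norm `‖v‖_{p,ρ}`, valued in `[0,∞]`. -/
def wnorm (d : ℕ) (p : ℝ) (ρ v : Ed d → ℝ) : ℝ≥0∞ :=
  (∫⁻ x : Ed d, ENNReal.ofReal (|v x| ^ p * ρ x)) ^ (1 / p)

/-- Smooth compactly supported test functions on `ℝ^d × (0,∞)`. -/
def IsTestFn (d : ℕ) (φ : Ed d × ℝ → ℝ) : Prop :=
  ContDiff ℝ (⊤ : ℕ∞) φ ∧ HasCompactSupport φ ∧ tsupport φ ⊆ univ ×ˢ Ioi (0 : ℝ)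

/-- Conditions (i)–(iii) of the definition of weak solution of
`ρ u_t + (-Δ)^s(u^m) = 0` on `ℝ^d × (0,∞)` (no initial datum prescribed). -/
structure WeakSolCore (d : ℕ) (s m κ : ℝ) (ρ : Ed d → ℝ) (u : Ed d → ℝ → ℝ) : Prop where
  measurable : Measurable (Function.uncurry u)
  nonneg : ∀ x t, 0 ≤ u x t
  /-- (i), first part: `ess sup_{t>0} ∫ u(·,t) ρ < ∞`. -/
  massBound : ∃ M : ℝ, ∀ᵐ t ∂(volume.restrict (Ioi (0 : ℝ))),
    Integrable (fun x : Ed d => u x t * ρ x) ∧ (∫ x : Ed d, u x t * ρ x) ≤ M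
  /-- (i), second part: `u` essentially bounded on `ℝ^d × (τ,∞)` for every `τ > 0`. -/
  essBdd : ∀ τ : ℝ, 0 < τ → ∃ B : ℝ,
    ∀ᵐ p ∂(volume : Measure (Ed d × ℝ)), τ < p.2 → u p.1 p.2 ≤ B
  /-- (ii), first part: `‖u^m(·,t)‖_{Ḣ^s} < ∞` for a.e. `t > 0`. -/
  energyFinite : ∀ᵐ t ∂(volume.restrict (Ioi (0 : ℝ))),
    gagliardoSq d s κ (fun x => u x t ^ m) < ⊤
  /-- (ii), second part: `t ↦ ‖u^m(·,t)‖_{Ḣ^s}²` locally integrable on `(0,∞)`. -/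
  energyLocInt : ∀ t₁ t₂ : ℝ, 0 < t₁ → t₁ < t₂ →
    (∫⁻ t in Ioc t₁ t₂, gagliardoSq d s κ (fun x => u x t ^ m)) ≠ ⊤
  /-- (iii): the weak formulation against all test functions. -/
  weakForm : ∀ φ : Ed d × ℝ → ℝ, IsTestFn d φ →
    -(∫ t in Ioi (0 : ℝ), ∫ x : Ed d, u x t * deriv (fun τ => φ (x, τ)) t * ρ x)
      + ∫ t in Ioi (0 : ℝ),
          gagliardoE d s κ (fun x => u x t ^ m) (fun x => φ (x, t)) = 0

/-- Condition (iv): `ρ(·)u(·,t) → μ` as `t → 0` essentially, tested against all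
bounded continuous functions. -/
def HasInitialTrace (d : ℕ) (ρ : Ed d → ℝ) (u : Ed d → ℝ → ℝ)
    (μ : Measure (Ed d)) : Prop :=
  ∃ N : Set ℝ, volume N = 0 ∧
    ∀ φ : Ed d → ℝ, Continuous φ → (∃ B : ℝ, ∀ x, |φ x| ≤ B) →
      Tendsto (fun t => ∫ x : Ed d, φ x * (u x t * ρ x))
        (𝓝[(Ioi (0 : ℝ)) \ N] 0) (𝓝 (∫ x, φ x ∂μ))

/-- Weak solution of the Cauchy problem with initial datum `μ`. -/
def IsWeakSolution (d : ℕ) (s m κ : ℝ) (ρ : Ed d → ℝ) (μ : Measure (Ed d))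
    (u : Ed d → ℝ → ℝ) : Prop :=
  WeakSolCore d s m κ ρ u ∧ HasInitialTrace d ρ u μ

/-!
Test the equation with `θ t * χ (R⁻¹ • x)`, where `χ` is a smooth cutoff. By symmetry the Gagliardo
form moves onto the cutoff as a second difference, and scaling together with a weighted bound on
second differences gives `E(v, χ(·/R)) = O(R ^ (γ - 2 * s)) * ∫ |v| (1 + |x|) ^ (-γ)`. For
`v = u ^ m` the last integral is controlled by the mass, because `u` is bounded away from `t = 0`
and `ρ` dominates a multiple of `(1 + |x|) ^ (-γ)`. As `γ < 2 * s`, the flux vanishes when `R → ∞`: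
the distributional derivative of the mass is zero, so the mass is a.e. constant, and testing the
initial trace with the constant `1` identifies the constant.
-/

section SecondDifference

/-- The symmetric second difference of `φ` at `x` with step `z`. The sign is that of `-Δ`, so that
`(-Δ)^s φ (x)` is a positive multiple of `∫ secondDiff φ x z / ‖z‖ ^ (d + 2 * s) dz`. -/
def secondDiff {E : Type*} [AddCommGroup E] (φ : E → ℝ) (x z : E) : ℝ :=
  2 * φ x - φ (x + z) - φ (x - z)

theorem secondDiff_comp_smul {E : Type*} [AddCommGroup E] [Module ℝ E] (φ : E → ℝ) (a : ℝ)
    (x z : E) : secondDiff (fun y => φ (a • y)) x z = secondDiff φ (a • x) (a • z) := by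
  simp only [secondDiff, smul_add, smul_sub]

theorem abs_secondDiff_le_of_abs_le {E : Type*} [AddCommGroup E] {φ : E → ℝ} {M : ℝ}
    (hM : ∀ x, |φ x| ≤ M) (x z : E) : |secondDiff φ x z| ≤ 4 * M := by
  have h₀ := abs_le.1 (hM x)
  have h₁ := abs_le.1 (hM (x + z))
  have h₂ := abs_le.1 (hM (x - z))
  rw [secondDiff, abs_le]
  constructor <;> linarith

section Normed

variable {E : Type*} [NormedAddCommGroup E] {φ : E → ℝ}

theorem secondDiff_eq_zero_of_lt_norm {r : ℝ} (hφ : ∀ x, r ≤ ‖x‖ → φ x = 0) {x z : E}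
    (hx : r + ‖z‖ < ‖x‖) : secondDiff φ x z = 0 := by
  have h_add : r ≤ ‖x + z‖ := by linarith [norm_sub_le_norm_add x z]
  have h_sub : r ≤ ‖x - z‖ := by linarith [norm_sub_norm_le x z]
  rw [secondDiff, hφ x (by linarith [norm_nonneg z]), hφ _ h_add, hφ _ h_sub]
  norm_num

theorem abs_secondDiff_le_of_lipschitzWith_fderiv [NormedSpace ℝ E] {L : ℝ≥0}
    (hφ : Differentiable ℝ φ) (hL : LipschitzWith L (fderiv ℝ φ)) (x z : E) :
    |secondDiff φ x z| ≤ L * ‖z‖ ^ 2 := by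
  -- The second difference is an increment of the first difference, whose derivative is `O(‖z‖)`.
  have h_deriv : ∀ y, HasFDerivAt (fun y => φ (y + z) - φ y)
      (fderiv ℝ φ (y + z) - fderiv ℝ φ y) y := fun y =>
    ((hasFDerivAt_comp_add_right z).2 (hφ (y + z)).hasFDerivAt).sub (hφ y).hasFDerivAt
  have h_bound : ∀ y, ‖fderiv ℝ φ (y + z) - fderiv ℝ φ y‖ ≤ L * ‖z‖ := fun y => by
    simpa using hL.norm_sub_le (y + z) y
  have h_mvt := convex_univ.norm_image_sub_le_of_norm_hasFDerivWithin_le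
    (fun y _ => (h_deriv y).hasFDerivWithinAt) (fun y _ => h_bound y)
    (mem_univ x) (mem_univ (x - z))
  calc |secondDiff φ x z|
      = ‖(φ (x - z + z) - φ (x - z)) - (φ (x + z) - φ x)‖ := by
        rw [sub_add_cancel, secondDiff, Real.norm_eq_abs]; ring_nf
    _ ≤ L * ‖z‖ * ‖x - z - x‖ := h_mvt
    _ = L * ‖z‖ ^ 2 := by rw [sub_sub_cancel_left, norm_neg]; ring

theorem exists_abs_secondDiff_le_min [NormedSpace ℝ E] (hφ : ContDiff ℝ 2 φ)
    (hφc : HasCompactSupport φ) :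
    ∃ C, 0 ≤ C ∧ ∀ x z, |secondDiff φ x z| ≤ C * min (‖z‖ ^ 2) 1 := by
  obtain ⟨L, hL⟩ := ContDiff.lipschitzWith_of_hasCompactSupport (hφc.fderiv (𝕜 := ℝ))
    (hφ.fderiv_right (m := 1) (by norm_num)) one_ne_zero
  obtain ⟨M, hM⟩ := hφc.exists_bound_of_continuous hφ.continuous
  have hC : (0 : ℝ) ≤ max (L : ℝ) (4 * M) := le_max_of_le_left L.2
  refine ⟨max L (4 * M), hC, fun x z => ?_⟩
  rw [mul_min_of_nonneg _ _ hC, mul_one]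
  refine le_min ?_ ((abs_secondDiff_le_of_abs_le hM x z).trans (le_max_right _ _))
  refine (abs_secondDiff_le_of_lipschitzWith_fderiv (hφ.differentiable two_ne_zero) hL x z).trans ?_
  gcongr
  exact le_max_left _ _

end Normed

/-- The radial profile bounding second differences of test functions in the step length `r`: it is
quadratically small at the origin, and its growth `r ^ γ` pays for a decay `‖x‖ ^ (-γ)` in the base
point. -/
def secondDiffMajorant (γ r : ℝ) : ℝ := (1 + r) ^ γ * min (r ^ 2) 1

theorem secondDiffMajorant_nonneg (γ : ℝ) {r : ℝ} (hr : 0 ≤ r) : 0 ≤ secondDiffMajorant γ r :=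
  mul_nonneg (by positivity) (by positivity)

theorem measurable_secondDiffMajorant (γ : ℝ) : Measurable (secondDiffMajorant γ) := by
  unfold secondDiffMajorant; fun_prop

theorem secondDiffMajorant_le_sq {γ r : ℝ} (hγ : 0 ≤ γ) (hr₀ : 0 ≤ r) (hr₁ : r ≤ 1) :
    secondDiffMajorant γ r ≤ 2 ^ γ * r ^ 2 := by
  unfold secondDiffMajorant
  gcongr
  · linarith
  · exact min_le_left _ _

theorem secondDiffMajorant_le_rpow {γ r : ℝ} (hγ : 0 ≤ γ) (hr : 1 ≤ r) :
    secondDiffMajorant γ r ≤ 2 ^ γ * r ^ γ := by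
  rw [← Real.mul_rpow two_pos.le (by linarith), ← mul_one ((2 * r) ^ γ)]
  unfold secondDiffMajorant
  gcongr
  · linarith
  · exact min_le_right _ _

variable {E : Type*} [NormedAddCommGroup E] [NormedSpace ℝ E] {φ : E → ℝ} {γ : ℝ}

theorem exists_abs_secondDiff_le_majorant (hφ : ContDiff ℝ 2 φ) (hφc : HasCompactSupport φ)
    (hγ : 0 ≤ γ) :
    ∃ C, 0 ≤ C ∧ ∀ x z,
      |secondDiff φ x z| ≤ (1 + ‖x‖) ^ (-γ) * (C * secondDiffMajorant γ ‖z‖) := by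
  obtain ⟨C, hC, hC_le⟩ := exists_abs_secondDiff_le_min hφ hφc
  obtain ⟨r, hr, hφr⟩ := hφc.exists_pos_le_norm
  refine ⟨C * (1 + r) ^ γ, by positivity, fun x z => ?_⟩
  rcases lt_or_ge (r + ‖z‖) ‖x‖ with hx | hx
  · rw [secondDiff_eq_zero_of_lt_norm hφr hx, abs_zero]
    have := secondDiffMajorant_nonneg γ (norm_nonneg z)
    positivity
  · have h_weight : 1 ≤ (1 + ‖x‖) ^ (-γ) * ((1 + r) ^ γ * (1 + ‖z‖) ^ γ) := by
      rw [Real.rpow_neg (by positivity), ← div_eq_inv_mul, one_le_div (by positivity),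
        ← Real.mul_rpow (by positivity) (by positivity)]
      gcongr
      nlinarith [norm_nonneg z]
    calc |secondDiff φ x z| ≤ C * min (‖z‖ ^ 2) 1 := hC_le x z
      _ ≤ (1 + ‖x‖) ^ (-γ) * ((1 + r) ^ γ * (1 + ‖z‖) ^ γ) * (C * min (‖z‖ ^ 2) 1) :=
        le_mul_of_one_le_left (by positivity) h_weight
      _ = (1 + ‖x‖) ^ (-γ) * (C * (1 + r) ^ γ * secondDiffMajorant γ ‖z‖) := by
        unfold secondDiffMajorant; ring

theorem one_add_norm_inv_smul_rpow_neg_le {R : ℝ} (hR : 1 ≤ R) (hγ : 0 ≤ γ) (x : E) :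
    (1 + ‖R⁻¹ • x‖) ^ (-γ) ≤ R ^ γ * (1 + ‖x‖) ^ (-γ) := by
  have hR₀ : 0 < R := by linarith
  have h_le : 1 + ‖x‖ ≤ R * (1 + ‖R⁻¹ • x‖) := by
    rw [norm_smul, norm_inv, Real.norm_of_nonneg hR₀.le, mul_add, mul_inv_cancel_left₀ hR₀.ne']
    linarith
  rw [Real.rpow_neg (by positivity), Real.rpow_neg (by positivity), ← div_eq_mul_inv,
    le_div_iff₀ (by positivity), inv_mul_le_iff₀ (by positivity), mul_comm,
    ← Real.mul_rpow hR₀.le (by positivity)]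
  gcongr

theorem exists_abs_secondDiff_comp_inv_smul_le (hφ : ContDiff ℝ 2 φ) (hφc : HasCompactSupport φ)
    (hγ : 0 ≤ γ) :
    ∃ C, 0 ≤ C ∧ ∀ R, 1 ≤ R → ∀ x z, |secondDiff (fun y => φ (R⁻¹ • y)) x z| ≤
      (1 + ‖x‖) ^ (-γ) * (C * R ^ γ * secondDiffMajorant γ ‖R⁻¹ • z‖) := by
  obtain ⟨C, hC, hC_le⟩ := exists_abs_secondDiff_le_majorant hφ hφc hγ
  refine ⟨C, hC, fun R hR x z => ?_⟩
  have h_nonneg := secondDiffMajorant_nonneg γ (norm_nonneg (R⁻¹ • z))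
  rw [secondDiff_comp_smul]
  calc |secondDiff φ (R⁻¹ • x) (R⁻¹ • z)|
      ≤ (1 + ‖R⁻¹ • x‖) ^ (-γ) * (C * secondDiffMajorant γ ‖R⁻¹ • z‖) := hC_le _ _
    _ ≤ R ^ γ * (1 + ‖x‖) ^ (-γ) * (C * secondDiffMajorant γ ‖R⁻¹ • z‖) := by
      gcongr
      exact one_add_norm_inv_smul_rpow_neg_le hR hγ x
    _ = (1 + ‖x‖) ^ (-γ) * (C * R ^ γ * secondDiffMajorant γ ‖R⁻¹ • z‖) := by ring

end SecondDifference

section KernelIntegrals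

theorem integrableOn_secondDiffMajorant_mul_rpow {s γ : ℝ} (hs : s < 1) (hγ : 0 ≤ γ)
    (hγs : γ < 2 * s) :
    IntegrableOn (fun r => secondDiffMajorant γ r * r ^ (-1 - 2 * s)) (Ioi 0) := by
  have h_meas : Measurable fun r : ℝ => secondDiffMajorant γ r * r ^ (-1 - 2 * s) :=
    (measurable_secondDiffMajorant γ).mul (by fun_prop)
  have h_near : IntegrableOn (fun r => 2 ^ γ * r ^ (1 - 2 * s)) (Ioc (0 : ℝ) 1) := by
    rw [integrableOn_Ioc_iff_integrableOn_Ioo]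
    exact ((intervalIntegral.integrableOn_Ioo_rpow_iff one_pos).2 (by linarith)).const_mul _
  have h_far : IntegrableOn (fun r => 2 ^ γ * r ^ (γ - 1 - 2 * s)) (Ioi (1 : ℝ)) :=
    (integrableOn_Ioi_rpow_of_lt (by linarith) one_pos).const_mul _
  rw [← Ioc_union_Ioi_eq_Ioi zero_le_one]
  refine IntegrableOn.union ?_ ?_
  · refine h_near.mono' h_meas.aestronglyMeasurable <|
      (ae_restrict_iff' measurableSet_Ioc).2 <| .of_forall fun r ⟨hr₀, hr₁⟩ => ?_
    have h_exp : r ^ 2 * r ^ (-1 - 2 * s) = r ^ (1 - 2 * s) := by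
      rw [← Real.rpow_natCast, ← Real.rpow_add hr₀]; congr 1; push_cast; ring
    rw [Real.norm_of_nonneg (mul_nonneg (secondDiffMajorant_nonneg γ hr₀.le) (by positivity)),
      ← h_exp, ← mul_assoc]
    gcongr
    exact secondDiffMajorant_le_sq hγ hr₀.le hr₁
  · refine h_far.mono' h_meas.aestronglyMeasurable <|
      (ae_restrict_iff' measurableSet_Ioi).2 <| .of_forall fun r (hr : 1 < r) => ?_
    have hr₀ : 0 < r := one_pos.trans hr
    have h_exp : r ^ γ * r ^ (-1 - 2 * s) = r ^ (γ - 1 - 2 * s) := by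
      rw [← Real.rpow_add hr₀]; congr 1; ring
    rw [Real.norm_of_nonneg (mul_nonneg (secondDiffMajorant_nonneg γ hr₀.le) (by positivity)),
      ← h_exp, ← mul_assoc]
    gcongr
    exact secondDiffMajorant_le_rpow hγ hr.le

variable {E : Type*} [NormedAddCommGroup E] [NormedSpace ℝ E]

theorem comp_inv_smul_div_norm_rpow (g : E → ℝ) (q : ℝ) {R : ℝ} (hR : 0 < R) (z : E) :
    g (R⁻¹ • z) / ‖z‖ ^ q = R ^ (-q) * (g (R⁻¹ • z) / ‖R⁻¹ • z‖ ^ q) := by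
  have hRq : R ^ (-q) ≠ 0 := (Real.rpow_pos_of_pos hR _).ne'
  rw [norm_smul, norm_inv, Real.norm_of_nonneg hR.le,
    Real.mul_rpow (inv_nonneg.2 hR.le) (norm_nonneg z), Real.inv_rpow hR.le, ← Real.rpow_neg hR.le,
    mul_div_assoc', mul_div_mul_left _ _ hRq]

variable [FiniteDimensional ℝ E] [MeasurableSpace E] [BorelSpace E] (μ : Measure E)
  [μ.IsAddHaarMeasure]

theorem integrable_secondDiffMajorant_norm_div {s γ : ℝ} (hs : s < 1) (hγ : 0 ≤ γ)
    (hγs : γ < 2 * s) :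
    Integrable (fun z => secondDiffMajorant γ ‖z‖ / ‖z‖ ^ (Module.finrank ℝ E + 2 * s)) μ := by
  rcases subsingleton_or_nontrivial E with hE | hE
  · simp [Subsingleton.elim _ (0 : E), secondDiffMajorant]
  rw [integrable_fun_norm_addHaar μ
    (f := fun r => secondDiffMajorant γ r / r ^ (Module.finrank ℝ E + 2 * s))]
  refine (integrableOn_secondDiffMajorant_mul_rpow hs hγ hγs).congr_fun (fun r hr => ?_)
    measurableSet_Ioi
  have hr : 0 < r := hr
  have h_dim : ((Module.finrank ℝ E - 1 : ℕ) : ℝ) = Module.finrank ℝ E - 1 :=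
    Nat.cast_pred Module.finrank_pos
  have h_exp : r ^ (Module.finrank ℝ E - 1) * (r ^ (Module.finrank ℝ E + 2 * s))⁻¹ =
      r ^ (-1 - 2 * s) := by
    rw [← Real.rpow_natCast, ← Real.rpow_neg hr.le, ← Real.rpow_add hr, h_dim]
    congr 1; ring
  simp only [smul_eq_mul, div_eq_mul_inv, ← h_exp]
  ring

theorem integrable_comp_inv_smul_div_norm_rpow {g : E → ℝ} {q R : ℝ} (hR : 0 < R)
    (hg : Integrable (fun z => g z / ‖z‖ ^ q) μ) :
    Integrable (fun z => g (R⁻¹ • z) / ‖z‖ ^ q) μ := by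
  simp only [comp_inv_smul_div_norm_rpow g q hR]
  exact (hg.comp_smul (inv_ne_zero hR.ne')).const_mul _

theorem integral_comp_inv_smul_div_norm_rpow (g : E → ℝ) (q : ℝ) {R : ℝ} (hR : 0 < R) :
    ∫ z, g (R⁻¹ • z) / ‖z‖ ^ q ∂μ =
      R ^ (Module.finrank ℝ E - q) * ∫ z, g z / ‖z‖ ^ q ∂μ := by
  simp only [comp_inv_smul_div_norm_rpow g q hR]
  rw [integral_const_mul,
    Measure.integral_comp_inv_smul_of_nonneg μ (fun z => g z / ‖z‖ ^ q) hR.le, smul_eq_mul,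
    ← mul_assoc, ← Real.rpow_natCast, ← Real.rpow_add hR, neg_add_eq_sub]

end KernelIntegrals

section GagliardoForm

section BilinearKernel

variable {E : Type*} [NormedAddCommGroup E] [MeasurableSpace E] [BorelSpace E] {μ : Measure E}
  [μ.IsAddRightInvariant] {v φ : E → ℝ}

theorem integral_sub_comp_add_mul_sub_comp_add (hv : LocallyIntegrable v μ) (hφ : Continuous φ)
    (hφc : HasCompactSupport φ) (z : E) :
    ∫ x, (v x - v (x + z)) * (φ x - φ (x + z)) ∂μ = ∫ x, v x * secondDiff φ x z ∂μ := by
  have h_int : ∀ y, Integrable (fun x => v x * (φ x - φ (x + y))) μ := fun y =>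
    hv.integrable_smul_right_of_hasCompactSupport (by fun_prop)
      (hφc.sub (hφc.comp_homeomorph (Homeomorph.addRight y)))
  have h_translate : ∫ x, v (x + z) * (φ (x + z) - φ (x + z + -z)) ∂μ =
      ∫ x, v x * (φ x - φ (x + -z)) ∂μ :=
    integral_add_right_eq_self (fun x => v x * (φ x - φ (x + -z))) z
  calc ∫ x, (v x - v (x + z)) * (φ x - φ (x + z)) ∂μ
      = ∫ x, (v x * (φ x - φ (x + z)) + v (x + z) * (φ (x + z) - φ (x + z + -z))) ∂μ := by
        simp only [add_neg_cancel_right]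
        congr with x
        ring
    _ = ∫ x, (v x * (φ x - φ (x + z)) + v x * (φ x - φ (x + -z))) ∂μ := by
        rw [integral_add (h_int z) ((h_int (-z)).comp_add_right z), h_translate,
          integral_add (h_int z) (h_int (-z))]
    _ = ∫ x, v x * secondDiff φ x z ∂μ := by
        simp only [secondDiff, ← sub_eq_add_neg]
        congr with x
        ring

theorem abs_integral_sub_mul_sub_mul_kernel_le [SFinite μ] {ν : Measure E} [SFinite ν]
    {w G k : E → ℝ} (hv : LocallyIntegrable v μ) (hφ : Continuous φ) (hφc : HasCompactSupport φ)
    (hk : ∀ z, 0 ≤ k z) (hvw : Integrable (fun x => |v x| * w x) μ)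
    (hGk : Integrable (fun z => G z * k z) ν) (hle : ∀ x z, |secondDiff φ x z| ≤ w x * G z) :
    |∫ p : E × E, (v p.1 - v (p.1 + p.2)) * (φ p.1 - φ (p.1 + p.2)) * k p.2 ∂(μ.prod ν)| ≤
      (∫ x, |v x| * w x ∂μ) * ∫ z, G z * k z ∂ν := by
  by_cases hF : Integrable (fun p : E × E =>
    (v p.1 - v (p.1 + p.2)) * (φ p.1 - φ (p.1 + p.2)) * k p.2) (μ.prod ν)
  swap
  · -- Here the left-hand side is the default value `0`.
    rw [integral_undef hF, abs_zero, ← integral_prod_mul]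
    refine integral_nonneg fun p => ?_
    have h_nonneg := mul_nonneg (mul_nonneg (abs_nonneg (v p.1))
      ((abs_nonneg _).trans (hle p.1 p.2))) (hk p.2)
    simpa only [Pi.zero_apply, mul_assoc] using h_nonneg
  have h_slice : ∀ z, |∫ x, v x * secondDiff φ x z ∂μ| ≤ (∫ x, |v x| * w x ∂μ) * G z := fun z => by
    rw [← integral_mul_const, ← Real.norm_eq_abs]
    refine norm_integral_le_of_norm_le (hvw.mul_const _) (.of_forall fun x => ?_)
    rw [norm_mul, mul_assoc]
    exact mul_le_mul_of_nonneg_left (hle x z) (norm_nonneg _)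
  rw [integral_prod_symm _ hF, ← integral_const_mul, ← Real.norm_eq_abs]
  refine norm_integral_le_of_norm_le (hGk.const_mul _) (.of_forall fun z => ?_)
  dsimp only
  rw [integral_mul_const, integral_sub_comp_add_mul_sub_comp_add hv hφ hφc, norm_mul,
    Real.norm_of_nonneg (hk z), ← mul_assoc]
  exact mul_le_mul_of_nonneg_right (h_slice z) (hk z)

theorem locallyIntegrable_of_integrable_mul_continuous {X : Type*} [TopologicalSpace X]
    [LocallyCompactSpace X] [T2Space X] [MeasurableSpace X] [OpensMeasurableSpace X]
    {μ : Measure X} {f w : X → ℝ} (hw : Continuous w) (hw₀ : ∀ x, w x ≠ 0)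
    (hfw : Integrable (fun x => f x * w x) μ) : LocallyIntegrable f μ := by
  have h := hfw.locallyIntegrable.mul_continuous (hw.inv₀ hw₀)
  simpa [mul_assoc, hw₀] using h

end BilinearKernel

variable {d : ℕ} {s γ : ℝ}

theorem gagliardoE_const_mul_right (d : ℕ) (s κ a : ℝ) (v w : Ed d → ℝ) :
    gagliardoE d s κ v (fun x => a * w x) = a * gagliardoE d s κ v w := by
  simp only [gagliardoE, ← mul_sub, mul_left_comm _ a, mul_div_assoc, integral_const_mul]

theorem gagliardoE_eq_integral_add (d : ℕ) (s κ : ℝ) (v w : Ed d → ℝ) :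
    gagliardoE d s κ v w = κ / 2 * ∫ p : Ed d × Ed d,
      (v p.1 - v (p.1 + p.2)) * (w p.1 - w (p.1 + p.2)) * (‖p.2‖ ^ ((d : ℝ) + 2 * s))⁻¹ := by
  have h_shear : MeasurePreserving (MeasurableEquiv.shearAddRight (Ed d)) volume volume :=
    measurePreserving_prod_add volume volume
  rw [gagliardoE, ← h_shear.integral_comp']
  simp [MeasurableEquiv.shearAddRight, div_eq_mul_inv]

theorem abs_gagliardoE_le (κ : ℝ) {v φ w G : Ed d → ℝ} (hv : LocallyIntegrable v)
    (hφ : Continuous φ) (hφc : HasCompactSupport φ) (hvw : Integrable (fun x => |v x| * w x))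
    (hG : Integrable (fun z => G z / ‖z‖ ^ ((d : ℝ) + 2 * s)))
    (hle : ∀ x z, |secondDiff φ x z| ≤ w x * G z) :
    |gagliardoE d s κ v φ| ≤
      |κ / 2| * ((∫ x, |v x| * w x) * ∫ z, G z / ‖z‖ ^ ((d : ℝ) + 2 * s)) := by
  simp only [div_eq_mul_inv (G _)] at hG ⊢
  rw [gagliardoE_eq_integral_add, abs_mul]
  gcongr
  exact abs_integral_sub_mul_sub_mul_kernel_le hv hφ hφc (fun z => by positivity) hvw hG hle

theorem exists_abs_gagliardoE_comp_inv_smul_le (κ : ℝ) {χ : Ed d → ℝ} (hs : s < 1) (hγ : 0 ≤ γ)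
    (hγs : γ < 2 * s) (hχ : ContDiff ℝ 2 χ) (hχc : HasCompactSupport χ) :
    ∃ K, 0 ≤ K ∧ ∀ R, 1 ≤ R → ∀ v : Ed d → ℝ, Integrable (fun x => v x * (1 + ‖x‖) ^ (-γ)) →
      |gagliardoE d s κ v (fun x => χ (R⁻¹ • x))| ≤
        K * R ^ (γ - 2 * s) * ∫ x, |v x| * (1 + ‖x‖) ^ (-γ) := by
  obtain ⟨C, hC, hC_le⟩ := exists_abs_secondDiff_comp_inv_smul_le hχ hχc hγ
  have h_kernel := integrable_secondDiffMajorant_norm_div (volume : Measure (Ed d)) hs hγ hγs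
  rw [finrank_euclideanSpace_fin] at h_kernel
  set I := ∫ z : Ed d, secondDiffMajorant γ ‖z‖ / ‖z‖ ^ ((d : ℝ) + 2 * s)
  have hI : 0 ≤ I := integral_nonneg fun z =>
    div_nonneg (secondDiffMajorant_nonneg γ (norm_nonneg z)) (by positivity)
  refine ⟨|κ / 2| * (C * I), by positivity, fun R hR v hv => ?_⟩
  have hR₀ : 0 < R := one_pos.trans_le hR
  have h_weight : Continuous fun x : Ed d => (1 + ‖x‖) ^ (-γ) :=
    (continuous_const.add continuous_norm).rpow_const fun x =>
      Or.inl (show 1 + ‖x‖ ≠ 0 by positivity)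
  have h_int := integrable_comp_inv_smul_div_norm_rpow volume hR₀ h_kernel
  have h_scaled := integral_comp_inv_smul_div_norm_rpow (volume : Measure (Ed d))
    (fun z => secondDiffMajorant γ ‖z‖) (d + 2 * s) hR₀
  have h_abs : Integrable fun x => |v x| * (1 + ‖x‖) ^ (-γ) :=
    hv.abs.congr (.of_forall fun x => by
      simp only [abs_mul]; rw [abs_of_nonneg (a := (1 + ‖x‖) ^ (-γ)) (by positivity)])
  have h_loc : LocallyIntegrable v := locallyIntegrable_of_integrable_mul_continuous h_weight
    (fun x => by positivity) hv
  have h_main := abs_gagliardoE_le (s := s) κ h_loc (hχ.continuous.comp (continuous_const_smul R⁻¹))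
    (hχc.comp_smul (inv_ne_zero hR₀.ne')) h_abs
    (by simpa only [mul_div_assoc] using h_int.const_mul (C * R ^ γ)) (hC_le R hR)
  simp only [mul_div_assoc, integral_const_mul] at h_main
  rw [h_scaled, finrank_euclideanSpace_fin, sub_add_cancel_left] at h_main
  refine h_main.trans_eq ?_
  rw [sub_eq_add_neg, Real.rpow_add hR₀]
  ring

end GagliardoForm

section WeightedPowers

theorem rpow_le_rpow_sub_one_mul {a b m : ℝ} (ha : 0 ≤ a) (hab : a ≤ b) (hm : 1 ≤ m) :
    a ^ m ≤ b ^ (m - 1) * a := by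
  have h_split : a ^ m = a ^ (m - 1) * a := by
    rw [← Real.rpow_add_one' ha (by linarith), sub_add_cancel]
  rw [h_split]
  gcongr

variable {X : Type*} [MeasurableSpace X] {μ : Measure X} {f w ρ : X → ℝ} {B c m : ℝ}

theorem ae_rpow_mul_le (hm : 1 ≤ m) (hc : 0 < c) (hf : ∀ x, 0 ≤ f x) (hw : ∀ x, 0 ≤ w x)
    (hfB : ∀ᵐ x ∂μ, f x ≤ B) (hρ : ∀ᵐ x ∂μ, c * w x ≤ ρ x) :
    ∀ᵐ x ∂μ, f x ^ m * w x ≤ B ^ (m - 1) * c⁻¹ * (f x * ρ x) := by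
  filter_upwards [hfB, hρ] with x hfx hρx
  have hB : 0 ≤ B := (hf x).trans hfx
  calc f x ^ m * w x ≤ B ^ (m - 1) * f x * (c⁻¹ * ρ x) :=
        mul_le_mul (rpow_le_rpow_sub_one_mul (hf x) hfx hm) ((le_inv_mul_iff₀ hc).2 hρx) (hw x)
          (mul_nonneg (by positivity) (hf x))
    _ = B ^ (m - 1) * c⁻¹ * (f x * ρ x) := by ring

theorem integrable_rpow_mul (hm : 1 ≤ m) (hc : 0 < c) (hf : ∀ x, 0 ≤ f x) (hw : ∀ x, 0 ≤ w x)
    (hfB : ∀ᵐ x ∂μ, f x ≤ B) (hρ : ∀ᵐ x ∂μ, c * w x ≤ ρ x) (hfm : AEMeasurable f μ)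
    (hwm : AEMeasurable w μ) (hfρ : Integrable (fun x => f x * ρ x) μ) :
    Integrable (fun x => f x ^ m * w x) μ := by
  refine (hfρ.const_mul (B ^ (m - 1) * c⁻¹)).mono'
    ((hfm.pow_const m).mul hwm).aestronglyMeasurable ?_
  filter_upwards [ae_rpow_mul_le hm hc hf hw hfB hρ] with x hx
  rwa [Real.norm_of_nonneg (mul_nonneg (Real.rpow_nonneg (hf x) m) (hw x))]

theorem integral_rpow_mul_le (hm : 1 ≤ m) (hc : 0 < c) (hf : ∀ x, 0 ≤ f x) (hw : ∀ x, 0 ≤ w x)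
    (hfB : ∀ᵐ x ∂μ, f x ≤ B) (hρ : ∀ᵐ x ∂μ, c * w x ≤ ρ x)
    (hfρ : Integrable (fun x => f x * ρ x) μ) :
    ∫ x, f x ^ m * w x ∂μ ≤ B ^ (m - 1) * c⁻¹ * ∫ x, f x * ρ x ∂μ := by
  rw [← integral_const_mul]
  exact integral_mono_of_nonneg
    (.of_forall fun x => mul_nonneg (Real.rpow_nonneg (hf x) m) (hw x)) (hfρ.const_mul _)
    (ae_rpow_mul_le hm hc hf hw hfB hρ)

theorem AdmissibleWeight.ae_mul_one_add_norm_rpow_le {d : ℕ} {ρ : Ed d → ℝ} {γ₀ γ c C : ℝ}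
    (hρ : AdmissibleWeight d ρ γ₀ γ c C) (hd : d ≠ 0) (hγ₀ : 0 ≤ γ₀) (hγ : 0 ≤ γ) :
    ∀ᵐ x, c * (1 + ‖x‖) ^ (-γ) ≤ ρ x := by
  have : NeZero d := ⟨hd⟩
  obtain ⟨hc, -, -, -, h_near, h_far⟩ := hρ
  filter_upwards [h_near, h_far, Measure.ae_ne volume 0] with x hx_near hx_far hx₀
  have hx : 0 < ‖x‖ := norm_pos_iff.2 hx₀
  rcases le_or_gt ‖x‖ 1 with hx₁ | hx₁
  · calc c * (1 + ‖x‖) ^ (-γ) ≤ c * 1 := by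
          gcongr
          exact Real.rpow_le_one_of_one_le_of_nonpos (by linarith) (by linarith)
      _ ≤ c * ‖x‖ ^ (-γ₀) := by
          gcongr
          exact Real.one_le_rpow_of_pos_of_le_one_of_nonpos hx hx₁ (by linarith)
      _ ≤ ρ x := (hx_near hx₁).1
  · calc c * (1 + ‖x‖) ^ (-γ) ≤ c * ‖x‖ ^ (-γ) := by
          gcongr c * ?_
          exact Real.rpow_le_rpow_of_nonpos hx (by linarith) (by linarith)
      _ ≤ ρ x := (hx_far hx₁).1

end WeightedPowers

section DuBoisReymond

theorem integrable_smul_of_tsupport_subset {X F : Type*} [TopologicalSpace X] [MeasurableSpace X]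
    [OpensMeasurableSpace X] [NormedAddCommGroup F] [NormedSpace ℝ F]
    {μ : Measure X} {U : Set X} {f : X → F} {ψ : X → ℝ} (hf : LocallyIntegrableOn f U μ)
    (hψ : Continuous ψ) (hψc : HasCompactSupport ψ) (hψU : tsupport ψ ⊆ U) :
    Integrable (fun t => ψ t • f t) μ := by
  have h_supp : Function.support (fun t => ψ t • f t) ⊆ tsupport ψ :=
    (Function.support_smul_subset_left ψ f).trans (subset_tsupport ψ)
  rw [← integrableOn_iff_integrable_of_support_subset h_supp]
  exact (hf.integrableOn_compact_subset hψU hψc).continuousOn_smul_of_subset hψ.continuousOn hψc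
    (isClosed_tsupport ψ).measurableSet Subset.rfl

theorem exists_contDiff_integral_eq_one {E : Type*} [NormedAddCommGroup E] [NormedSpace ℝ E]
    [FiniteDimensional ℝ E] [MeasurableSpace E] [BorelSpace E] (μ : Measure E)
    [IsLocallyFiniteMeasure μ] [μ.IsOpenPosMeasure] {U : Set E} (hU : IsOpen U)
    (hU₀ : U.Nonempty) :
    ∃ η : E → ℝ, ContDiff ℝ (⊤ : ℕ∞) η ∧ HasCompactSupport η ∧ tsupport η ⊆ U ∧
      ∫ x, η x ∂μ = 1 := by
  obtain ⟨x, hx⟩ := hU₀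
  obtain ⟨ε, hε, hεU⟩ := Metric.nhds_basis_closedBall.mem_iff.1 (hU.mem_nhds hx)
  let b : ContDiffBump x := ⟨ε / 2, ε, half_pos hε, half_lt_self hε⟩
  exact ⟨b.normed μ, b.contDiff_normed, b.hasCompactSupport_normed,
    (b.tsupport_normed_eq (μ := μ)).trans_subset hεU, b.integral_normed⟩

variable {F : Type*} [NormedAddCommGroup F] [NormedSpace ℝ F] [CompleteSpace F] {U : Set ℝ}

theorem exists_hasCompactSupport_deriv_eq {g : ℝ → F} (hU : U.OrdConnected)
    (hg : ContDiff ℝ (⊤ : ℕ∞) g) (hgc : HasCompactSupport g) (hgU : tsupport g ⊆ U)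
    (hg_int : ∫ t, g t = 0) :
    ∃ θ : ℝ → F, ContDiff ℝ (⊤ : ℕ∞) θ ∧ HasCompactSupport θ ∧ tsupport θ ⊆ U ∧ deriv θ = g := by
  rcases (tsupport g).eq_empty_or_nonempty with h_empty | h_nonempty
  · obtain rfl : g = 0 := tsupport_eq_empty_iff.1 h_empty
    exact ⟨0, contDiff_const, .zero, by simp, deriv_const' 0⟩
  obtain ⟨a, ha, ha_le⟩ := hgc.isCompact.exists_isLeast h_nonempty
  obtain ⟨b, hb, hb_ge⟩ := hgc.isCompact.exists_isGreatest h_nonempty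
  have hg_supp : Function.support g ⊆ Ioo a b := by
    rw [← interior_Icc]
    exact interior_maximal ((subset_tsupport g).trans fun t ht => ⟨ha_le ht, hb_ge ht⟩)
      hg.continuous.isOpen_support
  have h_deriv : ∀ t, HasDerivAt (fun t => ∫ r in a..t, g r) (g t) t := fun t =>
    hg.continuous.integral_hasStrictDerivAt a t |>.hasDerivAt
  have h_deriv_eq : deriv (fun t => ∫ r in a..t, g r) = g := funext fun t => (h_deriv t).deriv
  have h_supp : Function.support (fun t => ∫ r in a..t, g r) ⊆ Icc a b := by
    refine Function.support_subset_iff'.2 fun t ht => ?_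
    rcases lt_or_ge t a with hta | hat
    · refine intervalIntegral.integral_zero_ae (.of_forall fun r hr => ?_)
      rw [uIoc_of_ge hta.le] at hr
      exact Function.notMem_support.1 fun h => (hg_supp h).1.not_ge hr.2
    · have hbt : b < t := not_le.1 fun h => ht ⟨hat, h⟩
      rw [intervalIntegral.integral_eq_integral_of_support_subset
        (hg_supp.trans fun r hr => ⟨hr.1, (hr.2.trans hbt).le⟩), hg_int]
  refine ⟨_, contDiff_infty_iff_deriv.2 ⟨fun t => (h_deriv t).differentiableAt, ?_⟩,
    .of_support_subset_isCompact isCompact_Icc h_supp,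
    (closure_minimal h_supp isClosed_Icc).trans (hU.out (hgU ha) (hgU hb)), h_deriv_eq⟩
  rwa [h_deriv_eq]

theorem exists_ae_eq_const_of_integral_deriv_smul_eq_zero {f : ℝ → F} (hU : IsOpen U)
    (hUc : U.OrdConnected) (hf : LocallyIntegrableOn f U)
    (h : ∀ θ : ℝ → ℝ, ContDiff ℝ (⊤ : ℕ∞) θ → HasCompactSupport θ → tsupport θ ⊆ U →
      ∫ t, deriv θ t • f t = 0) :
    ∃ K, ∀ᵐ t, t ∈ U → f t = K := by
  rcases U.eq_empty_or_nonempty with rfl | hU₀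
  · exact ⟨0, by simp⟩
  obtain ⟨η, hη, hηc, hηU, hη_int⟩ := exists_contDiff_integral_eq_one volume hU hU₀
  have h_mean_zero : ∀ g : ℝ → ℝ, ContDiff ℝ (⊤ : ℕ∞) g → HasCompactSupport g → tsupport g ⊆ U →
      ∫ t, g t = 0 → ∫ t, g t • f t = 0 := fun g hg hgc hgU hg_int => by
    obtain ⟨θ, hθ, hθc, hθU, rfl⟩ := exists_hasCompactSupport_deriv_eq hUc hg hgc hgU hg_int
    exact h θ hθ hθc hθU
  refine ⟨∫ t, η t • f t, ?_⟩
  suffices h_zero : ∀ᵐ t, t ∈ U → f t - ∫ t, η t • f t = 0 by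
    filter_upwards [h_zero] with t ht htU using sub_eq_zero.1 (ht htU)
  refine hU.ae_eq_zero_of_integral_contDiff_smul_eq_zero
    (hf.sub ((locallyIntegrable_const _).locallyIntegrableOn _)) fun ψ hψ hψc hψU => ?_
  have hψ_int := hψ.continuous.integrable_of_hasCompactSupport (μ := volume) hψc
  have hη_int' := hη.continuous.integrable_of_hasCompactSupport (μ := volume) hηc
  have hψf := integrable_smul_of_tsupport_subset hf hψ.continuous hψc hψU
  have hηf := integrable_smul_of_tsupport_subset hf hη.continuous hηc hηU
  calc ∫ t, ψ t • (f t - ∫ t, η t • f t)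
      = ∫ t, (ψ t - (∫ r, ψ r) * η t) • f t := by
        simp only [smul_sub, sub_smul, mul_smul]
        rw [integral_sub hψf (hψ_int.smul_const _), integral_smul_const,
          integral_sub hψf (hηf.fun_smul _), integral_smul]
    _ = 0 := by
        refine h_mean_zero _ (hψ.sub (contDiff_const.mul hη)) (hψc.sub hηc.mul_left)
          ((tsupport_sub ψ _).trans
            (union_subset hψU ((tsupport_mul_subset_right ..).trans hηU))) ?_
        rw [integral_sub hψ_int (hη_int'.const_mul _), integral_const_mul, hη_int, mul_one,
          sub_self]

end DuBoisReymond

section MassBalance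

theorem tendsto_integral_comp_inv_smul_mul {E : Type*} [NormedAddCommGroup E] [NormedSpace ℝ E]
    [MeasurableSpace E] [BorelSpace E] {μ : Measure E} {χ g : E → ℝ} {b : ℝ} (hχ : Continuous χ)
    (hχb : ∀ x, |χ x| ≤ b) (hg : Integrable g μ) :
    Tendsto (fun R : ℝ => ∫ x, χ (R⁻¹ • x) * g x ∂μ) atTop (𝓝 (χ 0 * ∫ x, g x ∂μ)) := by
  rw [← integral_const_mul]
  refine tendsto_integral_filter_of_dominated_convergence (fun x => b * ‖g x‖)
    (.of_forall fun R => ?_) (.of_forall fun R => .of_forall fun x => ?_) (hg.norm.const_mul b)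
    (.of_forall fun x => ?_)
  · exact (hχ.comp (continuous_const_smul R⁻¹)).aestronglyMeasurable.mul hg.aestronglyMeasurable
  · rw [norm_mul]
    exact mul_le_mul_of_nonneg_right (hχb _) (norm_nonneg _)
  · have h_smul : Tendsto (fun R : ℝ => R⁻¹ • x) atTop (𝓝 0) := by
      simpa using (tendsto_inv_atTop_zero (𝕜 := ℝ)).smul_const x
    exact ((hχ.tendsto 0).comp h_smul).mul_const _

theorem exists_forall_le_eq_zero_of_tsupport_subset_Ioi {θ : ℝ → ℝ} {a : ℝ}
    (hθ : tsupport θ ⊆ Ioi a) : ∃ τ > a, ∀ t ≤ τ, θ t = 0 := by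
  obtain ⟨ε, hε, h_ball⟩ := Metric.nhds_basis_closedBall.mem_iff.1
    ((isClosed_tsupport θ).isOpen_compl.mem_nhds fun ha => lt_irrefl a (hθ ha))
  refine ⟨a + ε, lt_add_of_pos_right a hε, fun t ht => image_eq_zero_of_notMem_tsupport fun h => ?_⟩
  have hat : a < t := hθ h
  refine h_ball ?_ h
  rw [Metric.mem_closedBall, Real.dist_eq, abs_le]
  constructor <;> linarith

variable {d : ℕ} {s m κ γ c : ℝ} {ρ χ : Ed d → ℝ} {u : Ed d → ℝ → ℝ} {θ : ℝ → ℝ}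

theorem isTestFn_mul (hθ : ContDiff ℝ (⊤ : ℕ∞) θ) (hθc : HasCompactSupport θ)
    (hθ₀ : tsupport θ ⊆ Ioi 0) (hχ : ContDiff ℝ (⊤ : ℕ∞) χ) (hχc : HasCompactSupport χ) :
    IsTestFn d fun p => θ p.2 * χ p.1 := by
  have h_supp : Function.support (fun p : Ed d × ℝ => θ p.2 * χ p.1) ⊆
      tsupport χ ×ˢ tsupport θ := fun p hp =>
    ⟨subset_tsupport χ (right_ne_zero_of_mul hp), subset_tsupport θ (left_ne_zero_of_mul hp)⟩
  refine ⟨(hθ.comp contDiff_snd).mul (hχ.comp contDiff_fst),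
    .of_support_subset_isCompact (hχc.isCompact.prod hθc.isCompact) h_supp, ?_⟩
  exact (closure_minimal h_supp ((isClosed_tsupport χ).prod (isClosed_tsupport θ))).trans
    (prod_mono (subset_univ _) hθ₀)

namespace WeakSolCore

theorem setIntegral_deriv_mul_eq (hu : WeakSolCore d s m κ ρ u) (hθ : ContDiff ℝ (⊤ : ℕ∞) θ)
    (hθc : HasCompactSupport θ) (hθ₀ : tsupport θ ⊆ Ioi 0) (hχ : ContDiff ℝ (⊤ : ℕ∞) χ)
    (hχc : HasCompactSupport χ) :
    ∫ t in Ioi 0, deriv θ t * ∫ x, χ x * (u x t * ρ x) =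
      ∫ t in Ioi 0, θ t * gagliardoE d s κ (fun x => u x t ^ m) χ := by
  have h_weak := hu.weakForm _ (isTestFn_mul hθ hθc hθ₀ hχ hχc)
  have h_inner : ∀ t, ∫ x, u x t * deriv (fun r => θ r * χ x) t * ρ x =
      deriv θ t * ∫ x, χ x * (u x t * ρ x) := fun t => by
    rw [← integral_const_mul]
    refine integral_congr_ae (.of_forall fun x => ?_)
    simp only [deriv_mul_const_field]
    ring
  simp only [h_inner, gagliardoE_const_mul_right] at h_weak
  linarith

theorem exists_ae_ae_le (hu : WeakSolCore d s m κ ρ u) {τ : ℝ} (hτ : 0 < τ) :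
    ∃ B, ∀ᵐ t, τ < t → ∀ᵐ x, u x t ≤ B := by
  obtain ⟨B, hB⟩ := hu.essBdd τ hτ
  have h_meas : MeasurableSet {p : Ed d × ℝ | τ < p.2 → u p.1 p.2 ≤ B} :=
    (measurableSet_lt measurable_const measurable_snd).imp
      (measurableSet_le hu.measurable measurable_const)
  have h_swap := (Measure.ae_ae_comm h_meas).1 (Measure.ae_ae_of_ae_prod hB)
  exact ⟨B, h_swap.mono fun t ht hτt => ht.mono fun x hx => hx hτt⟩

theorem exists_integral_norm_le (hu : WeakSolCore d s m κ ρ u) (hρ : ∀ᵐ x, 0 ≤ ρ x) :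
    ∃ M, ∀ᵐ t ∂volume.restrict (Ioi 0),
      Integrable (fun x => u x t * ρ x) ∧ ∫ x, ‖u x t * ρ x‖ ≤ M := by
  obtain ⟨M, hM⟩ := hu.massBound
  refine ⟨M, hM.mono fun t ⟨h_int, h_le⟩ => ⟨h_int, ?_⟩⟩
  rwa [integral_congr_ae (hρ.mono fun x hx => Real.norm_of_nonneg (mul_nonneg (hu.nonneg x t) hx))]

theorem aestronglyMeasurable_integral_mul (hu : WeakSolCore d s m κ ρ u) (hρ : Measurable ρ)
    (hχ : Measurable χ) (ν : Measure ℝ) :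
    AEStronglyMeasurable (fun t => ∫ x, χ x * (u x t * ρ x)) ν := by
  have h_meas : Measurable fun p : Ed d × ℝ => χ p.1 * (u p.1 p.2 * ρ p.1) :=
    (hχ.comp measurable_fst).mul (hu.measurable.mul (hρ.comp measurable_fst))
  exact h_meas.stronglyMeasurable.integral_prod_left'.aestronglyMeasurable

theorem exists_abs_gagliardoE_rpow_le (hu : WeakSolCore d s m κ ρ u) (hs : s < 1)
    (hγ : 0 ≤ γ) (hγs : γ < 2 * s) (hm : 1 ≤ m) (hc : 0 < c)
    (hρ : ∀ᵐ x, c * (1 + ‖x‖) ^ (-γ) ≤ ρ x) (hχ : ContDiff ℝ 2 χ) (hχc : HasCompactSupport χ)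
    {τ : ℝ} (hτ : 0 < τ) :
    ∃ K, ∀ᵐ t ∂volume.restrict (Ioi 0), τ < t → ∀ R, 1 ≤ R →
      |gagliardoE d s κ (fun x => u x t ^ m) (fun x => χ (R⁻¹ • x))| ≤ K * R ^ (γ - 2 * s) := by
  obtain ⟨K, hK, hK_le⟩ := exists_abs_gagliardoE_comp_inv_smul_le κ hs hγ hγs hχ hχc
  obtain ⟨B, hB⟩ := hu.exists_ae_ae_le hτ
  obtain ⟨M, hM⟩ := hu.massBound
  refine ⟨K * (B ^ (m - 1) * c⁻¹ * M), ?_⟩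
  filter_upwards [hM, ae_restrict_of_ae hB] with t ⟨h_mass_int, h_mass_le⟩ hBt hτt R hR
  have hw : ∀ x : Ed d, 0 ≤ (1 + ‖x‖) ^ (-γ) := fun x => by positivity
  have hu_meas : Measurable fun x => u x t := hu.measurable.comp measurable_prodMk_right
  have hB₀ : 0 ≤ B := by
    obtain ⟨x, hx⟩ := (hBt hτt).exists
    exact (hu.nonneg x t).trans hx
  have h_int := integrable_rpow_mul hm hc (hu.nonneg · t) hw (hBt hτt) hρ hu_meas.aemeasurable
    (by fun_prop) h_mass_int
  have h_abs : ∀ x, |u x t ^ m| = u x t ^ m := fun x =>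
    abs_of_nonneg (Real.rpow_nonneg (hu.nonneg x t) m)
  calc |gagliardoE d s κ (fun x => u x t ^ m) (fun x => χ (R⁻¹ • x))|
      ≤ K * R ^ (γ - 2 * s) * ∫ x, |u x t ^ m| * (1 + ‖x‖) ^ (-γ) := hK_le R hR _ h_int
    _ = K * R ^ (γ - 2 * s) * ∫ x, u x t ^ m * (1 + ‖x‖) ^ (-γ) := by simp only [h_abs]
    _ ≤ K * R ^ (γ - 2 * s) * (B ^ (m - 1) * c⁻¹ * M) := by
      gcongr
      refine (integral_rpow_mul_le hm hc (hu.nonneg · t) hw (hBt hτt) hρ h_mass_int).trans ?_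
      gcongr
    _ = K * (B ^ (m - 1) * c⁻¹ * M) * R ^ (γ - 2 * s) := by ring

theorem tendsto_setIntegral_mul_gagliardoE (hu : WeakSolCore d s m κ ρ u) (hs : s < 1)
    (hγ : 0 ≤ γ) (hγs : γ < 2 * s) (hm : 1 ≤ m) (hc : 0 < c)
    (hρ : ∀ᵐ x, c * (1 + ‖x‖) ^ (-γ) ≤ ρ x) (hχ : ContDiff ℝ 2 χ) (hχc : HasCompactSupport χ)
    (hθ : Integrable θ) (hθ₀ : tsupport θ ⊆ Ioi 0) :
    Tendsto (fun R : ℝ => ∫ t in Ioi 0, θ t *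
      gagliardoE d s κ (fun x => u x t ^ m) (fun x => χ (R⁻¹ • x))) atTop (𝓝 0) := by
  obtain ⟨τ, hτ, hθτ⟩ := exists_forall_le_eq_zero_of_tsupport_subset_Ioi hθ₀
  obtain ⟨K, hK⟩ := hu.exists_abs_gagliardoE_rpow_le hs hγ hγs hm hc hρ hχ hχc hτ
  have h_rate : Tendsto (fun R : ℝ => (∫ t in Ioi 0, ‖θ t‖) * (K * R ^ (γ - 2 * s))) atTop
      (𝓝 0) := by
    have := tendsto_rpow_neg_atTop (y := 2 * s - γ) (by linarith)
    simpa using (this.const_mul K).const_mul (∫ t in Ioi 0, ‖θ t‖)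
  refine squeeze_zero_norm' ((eventually_ge_atTop 1).mono fun R hR => ?_) h_rate
  rw [← integral_mul_const]
  refine norm_integral_le_of_norm_le (hθ.norm.mul_const _).integrableOn ?_
  filter_upwards [hK] with t ht
  rw [norm_mul]
  rcases le_or_gt t τ with htτ | hτt
  · simp [hθτ t htτ]
  · exact mul_le_mul_of_nonneg_left (ht hτt R hR) (norm_nonneg _)

theorem tendsto_setIntegral_mul_integral (hu : WeakSolCore d s m κ ρ u) (hρm : Measurable ρ)
    (hρ : ∀ᵐ x, 0 ≤ ρ x) (hχ : Continuous χ) {b : ℝ} (hχb : ∀ x, |χ x| ≤ b) {g : ℝ → ℝ}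
    (hg : IntegrableOn g (Ioi 0)) :
    Tendsto (fun R : ℝ => ∫ t in Ioi 0, g t * ∫ x, χ (R⁻¹ • x) * (u x t * ρ x)) atTop
      (𝓝 (∫ t in Ioi 0, g t * (χ 0 * ∫ x, u x t * ρ x))) := by
  obtain ⟨M, hM⟩ := hu.exists_integral_norm_le hρ
  have hb : 0 ≤ b := (abs_nonneg _).trans (hχb 0)
  refine tendsto_integral_filter_of_dominated_convergence (fun t => ‖g t‖ * (b * M))
    (.of_forall fun R => ?_) (.of_forall fun R => ?_) (hg.norm.mul_const _) ?_
  · exact hg.aestronglyMeasurable.mul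
      (hu.aestronglyMeasurable_integral_mul hρm (hχ.measurable.comp (measurable_const_smul _)) _)
  · filter_upwards [hM] with t ⟨h_int, h_le⟩
    rw [norm_mul]
    gcongr
    calc ‖∫ x, χ (R⁻¹ • x) * (u x t * ρ x)‖ ≤ ∫ x, b * ‖u x t * ρ x‖ :=
          norm_integral_le_of_norm_le (h_int.norm.const_mul b) <| .of_forall fun x => by
            rw [norm_mul]
            exact mul_le_mul_of_nonneg_right (hχb _) (norm_nonneg _)
      _ ≤ b * M := by
          rw [integral_const_mul]
          gcongr
  · filter_upwards [hM] with t ⟨h_int, _⟩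
    exact (tendsto_integral_comp_inv_smul_mul hχ hχb h_int).const_mul _

theorem integral_deriv_mul_mass_eq_zero (hu : WeakSolCore d s m κ ρ u) (hs : s < 1)
    (hγ : 0 ≤ γ) (hγs : γ < 2 * s) (hm : 1 ≤ m) (hc : 0 < c) (hρm : Measurable ρ)
    (hρ : ∀ᵐ x, c * (1 + ‖x‖) ^ (-γ) ≤ ρ x) (hθ : ContDiff ℝ (⊤ : ℕ∞) θ)
    (hθc : HasCompactSupport θ) (hθ₀ : tsupport θ ⊆ Ioi 0) :
    ∫ t, deriv θ t * ∫ x, u x t * ρ x = 0 := by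
  let χ : ContDiffBump (0 : Ed d) := default
  have hχ₀ : χ 0 = 1 := χ.one_of_mem_closedBall (Metric.mem_closedBall_self χ.rIn_pos.le)
  have hρ₀ : ∀ᵐ x, 0 ≤ ρ x := hρ.mono fun x hx => le_trans (by positivity) hx
  have h_deriv : Integrable (deriv θ) :=
    (hθ.continuous_deriv (by simp)).integrable_of_hasCompactSupport hθc.deriv
  have h_flux := hu.tendsto_setIntegral_mul_gagliardoE hs hγ hγs hm hc hρ χ.contDiff
    χ.hasCompactSupport (hθ.continuous.integrable_of_hasCompactSupport hθc) hθ₀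
  have h_mass := hu.tendsto_setIntegral_mul_integral hρm hρ₀ χ.continuous
    (fun x => (abs_of_nonneg χ.nonneg).trans_le χ.le_one) h_deriv.integrableOn
  have h_balance : ∀ᶠ R : ℝ in atTop,
      ∫ t in Ioi 0, deriv θ t * ∫ x, χ (R⁻¹ • x) * (u x t * ρ x) =
        ∫ t in Ioi 0, θ t * gagliardoE d s κ (fun x => u x t ^ m) (fun x => χ (R⁻¹ • x)) :=
    (eventually_gt_atTop 0).mono fun R hR => hu.setIntegral_deriv_mul_eq hθ hθc hθ₀
      (χ.contDiff.comp (contDiff_const_smul R⁻¹))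
      (χ.hasCompactSupport.comp_smul (inv_ne_zero hR.ne'))
  have h_zero := tendsto_nhds_unique (h_mass.congr' h_balance) h_flux
  simp only [hχ₀, one_mul] at h_zero
  rwa [setIntegral_eq_integral_of_forall_compl_eq_zero fun t ht => ?_] at h_zero
  rw [Function.notMem_support.1 fun h => ht (hθ₀ (support_deriv_subset h)), zero_mul]

theorem exists_ae_mass_eq (hu : WeakSolCore d s m κ ρ u) (hs : s < 1)
    (hγ : 0 ≤ γ) (hγs : γ < 2 * s) (hm : 1 ≤ m) (hc : 0 < c) (hρm : Measurable ρ)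
    (hρ : ∀ᵐ x, c * (1 + ‖x‖) ^ (-γ) ≤ ρ x) :
    ∃ K, ∀ᵐ t, t ∈ Ioi 0 → ∫ x, u x t * ρ x = K := by
  refine exists_ae_eq_const_of_integral_deriv_smul_eq_zero isOpen_Ioi ordConnected_Ioi ?_
    fun θ hθ hθc hθ₀ => hu.integral_deriv_mul_mass_eq_zero hs hγ hγs hm hc hρm hρ hθ hθc hθ₀
  obtain ⟨M, hM⟩ := hu.exists_integral_norm_le (hρ.mono fun x hx => le_trans (by positivity) hx)
  have h_meas := hu.aestronglyMeasurable_integral_mul hρm (χ := 1) measurable_const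
    (volume.restrict (Ioi 0))
  simp only [Pi.one_apply, one_mul] at h_meas
  exact locallyIntegrableOn_of_locallyIntegrable_restrict <|
    (memLp_top_of_bound h_meas M <| hM.mono fun t ht =>
      (norm_integral_le_integral_norm _).trans ht.2).locallyIntegrable le_top

end WeakSolCore

end MassBalance

section InitialTrace

theorem frequently_nhdsWithin_diff_of_ae {X : Type*} [TopologicalSpace X] [MeasurableSpace X]
    {μ : Measure X} [μ.IsOpenPosMeasure] {U N : Set X} {x : X} {p : X → Prop} (hU : IsOpen U)
    (hx : x ∈ closure U) (hN : μ N = 0) (hp : ∀ᵐ y ∂μ, y ∈ U → p y) :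
    ∃ᶠ y in 𝓝[U \ N] x, p y := by
  have h_dense : Dense {y | (y ∈ U → p y) ∧ y ∉ N} :=
    Measure.dense_of_ae (hp.and (measure_eq_zero_iff_ae_notMem.1 hN))
  have h_mem : x ∈ closure (U ∩ {y | (y ∈ U → p y) ∧ y ∉ N}) :=
    closure_minimal (h_dense.open_subset_closure_inter hU) isClosed_closure hx
  rw [frequently_nhdsWithin_iff]
  exact (mem_closure_iff_frequently.1 h_mem).mono fun y hy => ⟨hy.2.1 hy.1, hy.1, hy.2.2⟩

variable {d : ℕ} {ρ : Ed d → ℝ} {u : Ed d → ℝ → ℝ} {μ : Measure (Ed d)}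

theorem HasInitialTrace.eq_of_ae_mass_eq (hu : HasInitialTrace d ρ u μ) {K : ℝ}
    (hK : ∀ᵐ t, t ∈ Ioi 0 → ∫ x, u x t * ρ x = K) : K = (μ univ).toReal := by
  obtain ⟨N, hN, h_trace⟩ := hu
  have h_lim := h_trace (fun _ => 1) continuous_const ⟨1, fun _ => by simp⟩
  simp only [one_mul, integral_const, smul_eq_mul, mul_one] at h_lim
  refine (tendsto_nhds_unique_of_frequently_eq h_lim tendsto_const_nhds ?_).symm
  exact frequently_nhdsWithin_diff_of_ae isOpen_Ioi (by simp) hN hK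

end InitialTrace

theorem mass_conservation_general {d : ℕ} {s m κ γ c : ℝ} (hs : s < 1) (hγ : 0 ≤ γ)
    (hγs : γ < 2 * s) (hm : 1 ≤ m) (hc : 0 < c) {ρ : Ed d → ℝ} (hρm : Measurable ρ)
    (hρ : ∀ᵐ x, c * (1 + ‖x‖) ^ (-γ) ≤ ρ x) {μ : Measure (Ed d)} [IsFiniteMeasure μ]
    {u : Ed d → ℝ → ℝ} (hu : IsWeakSolution d s m κ ρ μ u) :
    ∀ᵐ t ∂volume.restrict (Ioi 0), ∫ x, u x t * ρ x = (μ univ).toReal := by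
  obtain ⟨K, hK⟩ := hu.1.exists_ae_mass_eq hs hγ hγs hm hc hρm hρ
  rw [← hu.2.eq_of_ae_mass_eq hK]
  exact (ae_restrict_iff' measurableSet_Ioi).2 hK

/-- **Conservation of mass.** If `u` is a weak solution of
`ρ u_t + (-Δ)^s(u^m) = 0` with initial datum the positive finite Radon
measure `μ`, then `∫ u(x,t) ρ(x) dx = μ(ℝ^d)` for a.e. `t > 0`. -/
theorem mass_conservation
    (d : ℕ) (s m κ γ₀ γ c C : ℝ)
    (hs0 : 0 < s) (hs1 : s < 1) (hd : 2 * s < (d : ℝ)) (hm : 1 < m) (hκ : 0 < κ)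
    (hγ₀0 : 0 ≤ γ₀) (hγ₀γ : γ₀ ≤ γ) (hγs : γ < 2 * s) (hγd : γ ≤ (d : ℝ) - 2 * s)
    (ρ : Ed d → ℝ) (hρ : AdmissibleWeight d ρ γ₀ γ c C)
    (μ : Measure (Ed d)) (hμ : IsFiniteMeasure μ)
    (u : Ed d → ℝ → ℝ) (hu : IsWeakSolution d s m κ ρ μ u) :
    ∀ᵐ t ∂(volume.restrict (Ioi (0 : ℝ))),
      (∫ x : Ed d, u x t * ρ x) = (μ univ).toReal := by
  have hd₀ : d ≠ 0 := by
    rintro rfl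
    simp only [Nat.cast_zero] at hd
    linarith
  have hγ₀ : 0 ≤ γ := hγ₀0.trans hγ₀γ
  exact mass_conservation_general hs1 hγ₀ hγs hm.le hρ.1 hρ.2.2.1
    (hρ.ae_mul_one_add_norm_rpow_le hd₀ hγ₀0 hγ₀) hu
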